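/- arXiv:1902.03887 — 3 statements merged into one kernel-verified Lean document; each statement's English description precedes it below -/
import Mathlib

section
/- Let P be the uniform probability distribution on the boundary L of the regular hexagon with vertices (0,0), (1,0), (3/2,√3/2), (1,√3), (0,√3), (−1/2,√3/2), and let Vₙ(P) denote the nth quantization error. Then the one-dimensional quantization coefficient of P exists as a finite positive number and equals 3; that is, lim_{n→∞} n² Vₙ(P) = 3. -/
open MeasureTheory Real Filter
open scoped ENNReal

noncomputable section

/-- The plane `ℝ²` with the Euclidean norm. -/
abbrev E2 : Type := EuclideanSpace ℝ (Fin 2)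

/-- The point `(a, b)` of `ℝ²`. -/
def pt (a b : ℝ) : E2 := !₂[a, b]

/-- The `n`th quantization error of a Borel probability measure `P` on `ℝ²`:
the infimum of `∫ min_{a ∈ α} ‖x - a‖² dP(x)` over all (nonempty) finite sets
`α ⊆ ℝ²` with at most `n` elements. -/
def quantErr (P : Measure E2) (n : ℕ) : ℝ :=
  sInf {v : ℝ | ∃ α : Set E2, α.Finite ∧ α.Nonempty ∧ α.ncard ≤ n ∧
    v = ∫ x, sInf ((fun a => ‖x - a‖ ^ 2) '' α) ∂P}

/-- `α` is an optimal set of `n`-means for `P` if it attains the `n`th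
quantization error. -/
def IsOptimalSet (P : Measure E2) (n : ℕ) (α : Set E2) : Prop :=
  α.Finite ∧ α.Nonempty ∧ α.ncard ≤ n ∧
    (∫ x, sInf ((fun a => ‖x - a‖ ^ 2) '' α) ∂P) = quantErr P n

/-- The boundary `L` of the regular hexagon with vertices `O(0,0)`, `A₁(1,0)`,
`A₂(3/2,√3/2)`, `A₃(1,√3)`, `A₄(0,√3)`, `A₅(-1/2,√3/2)`. -/
def hexL : Set E2 :=
  segment ℝ (pt 0 0) (pt 1 0) ∪ segment ℝ (pt 1 0) (pt (3/2) (Real.sqrt 3/2)) ∪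
  segment ℝ (pt (3/2) (Real.sqrt 3/2)) (pt 1 (Real.sqrt 3)) ∪
  segment ℝ (pt 1 (Real.sqrt 3)) (pt 0 (Real.sqrt 3)) ∪
  segment ℝ (pt 0 (Real.sqrt 3)) (pt (-(1/2)) (Real.sqrt 3/2)) ∪
  segment ℝ (pt (-(1/2)) (Real.sqrt 3/2)) (pt 0 0)

/-- The uniform probability distribution on `hexL`: density `1/6` with respect
to the one-dimensional Hausdorff (arc-length) measure on `hexL`. -/
def hexP : Measure E2 := (6 : ℝ≥0∞)⁻¹ • (μH[1] : Measure E2).restrict hexL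

/-- arc-length parametrized line -/
def ln (x y c d : ℝ) (t : ℝ) : E2 := pt (x + t * c) (y + t * d)

lemma ln_isometry {x y c d : ℝ} (h : c ^ 2 + d ^ 2 = 1) : Isometry (ln x y c d) := by
  refine Isometry.of_dist_eq fun s t => ?_
  rw [EuclideanSpace.dist_eq, Real.dist_eq]
  simp only [ln, pt, Fin.sum_univ_two, Real.dist_eq, sq_abs]
  simp only [Matrix.cons_val_zero, Matrix.cons_val_one]
  rw [← Real.sqrt_sq_eq_abs]
  congr 1
  linear_combination (s - t) ^ 2 * h

def hx : Fin 6 → ℝ := ![0, 1, 3/2, 1, 0, -(1/2)]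
def hy : Fin 6 → ℝ := ![0, 0, Real.sqrt 3/2, Real.sqrt 3, Real.sqrt 3, Real.sqrt 3/2]
def hc : Fin 6 → ℝ := ![1, 1/2, -(1/2), -1, -(1/2), 1/2]
def hd : Fin 6 → ℝ := ![0, Real.sqrt 3/2, Real.sqrt 3/2, 0, -(Real.sqrt 3/2), -(Real.sqrt 3/2)]

def gam (i : Fin 6) : ℝ → E2 := ln (hx i) (hy i) (hc i) (hd i)

lemma hcd (i : Fin 6) : hc i ^ 2 + hd i ^ 2 = 1 := by
  have h3 : Real.sqrt 3 ^ 2 = 3 := Real.sq_sqrt (by norm_num)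
  fin_cases i <;> simp [hc, hd] <;> nlinarith

lemma gam_iso (i : Fin 6) : Isometry (gam i) := ln_isometry (hcd i)

lemma seg_eq (a b a' b' : ℝ) :
    segment ℝ (pt a b) (pt a' b') = ln a b (a' - a) (b' - b) '' Set.Icc 0 1 := by
  rw [segment_eq_image]
  congr 1
  ext t i
  fin_cases i <;> simp [ln, pt] <;> ring

lemma hexL_eq : hexL = ⋃ i : Fin 6, gam i '' Set.Icc 0 1 := by
  have e : ∀ (i : Fin 6) (a b c d : ℝ), a = hx i → b = hy i → c - a = hc i → d - b = hd i →
      segment ℝ (pt a b) (pt c d) = gam i '' Set.Icc 0 1 := by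
    intro i a b c d h1 h2 h3 h4
    rw [seg_eq, gam, h3, h4, h1, h2]
  unfold hexL
  rw [e 0, e 1, e 2, e 3, e 4, e 5]
  · ext z
    simp only [Set.mem_union, Set.mem_iUnion, Fin.exists_fin_succ]
    simp [or_assoc]
  all_goals simp [hx, hy, hc, hd]
  all_goals ring

lemma sep_aux {i j : Fin 6} (hij : i ≠ j) {e t : ℝ} (he : 0 < e) (h0 : e ≤ t) (h1 : t ≤ 1 - e) :
    e / 2 < -hd i * (hx j + t * hc j - hx i) + hc i * (hy j + t * hd j - hy i) := by
  have h3 : Real.sqrt 3 * Real.sqrt 3 = 3 := Real.mul_self_sqrt (by norm_num)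
  have h4 : 1 < Real.sqrt 3 := by
    rw [Real.lt_sqrt] <;> norm_num
  have h5 : e < Real.sqrt 3 * e := by nlinarith
  have h6 : e < Real.sqrt 3 * t := by nlinarith
  have h7 : e < Real.sqrt 3 * (1 - t) := by nlinarith
  have h8 : e < Real.sqrt 3 := by nlinarith
  fin_cases i <;> fin_cases j <;> first | exact absurd rfl hij | skip
  all_goals simp [hx, hy, hc, hd]
  all_goals nlinarith

lemma sep {i j : Fin 6} (hij : i ≠ j) {e s t : ℝ} (he : 0 < e) (h0 : e ≤ t) (h1 : t ≤ 1 - e) :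
    e / 2 < dist (gam i s) (gam j t) := by
  have h := sep_aux hij he h0 h1
  rw [EuclideanSpace.dist_eq]
  apply Real.lt_sqrt_of_sq_lt
  simp only [gam, ln, pt, Fin.sum_univ_two, Real.dist_eq, sq_abs]
  simp only [Matrix.cons_val_zero, Matrix.cons_val_one]
  have hi := hcd i
  generalize hc i = c at *
  generalize hd i = d at *
  set X := hx i + s * c - (hx j + t * hc j)
  set Y := hy i + s * d - (hy j + t * hd j)
  have : -d * (hx j + t * hc j - hx i) + c * (hy j + t * hd j - hy i) = d * X - c * Y := by
    simp only [X, Y]; ring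
  rw [this] at h
  have : (d * X - c * Y) ^ 2 ≤ X ^ 2 + Y ^ 2 := by
    nlinarith [sq_nonneg (c * X + d * Y)]
  nlinarith

lemma sInf_eq_infDist {α : Set E2} (hf : α.Finite) (hne : α.Nonempty) (x : E2) :
    sInf ((fun a => ‖x - a‖ ^ 2) '' α) = Metric.infDist x α ^ 2 := by
  obtain ⟨b, hb, h⟩ := hf.isCompact.exists_infDist_eq_dist hne x
  refine IsLeast.csInf_eq ⟨⟨b, hb, ?_⟩, ?_⟩
  · simp [h, dist_eq_norm]
  · rintro _ ⟨a, ha, rfl⟩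
    have := Metric.infDist_le_dist_of_mem (x := x) ha
    simp only [← dist_eq_norm]
    gcongr
    exact Metric.infDist_nonneg

lemma meas_image (i : Fin 6) (s : Set ℝ) : (μH[1] : Measure E2) (gam i '' s) = volume s := by
  rw [(gam_iso i).hausdorffMeasure_image (Or.inl zero_le_one), hausdorffMeasure_real]

lemma lint_image (i : Fin 6) (s : Set ℝ) (hs : IsCompact s) (f : E2 → ℝ≥0∞) (hf : Measurable f) :
    ∫⁻ x in gam i '' s, f x ∂(μH[1] : Measure E2) = ∫⁻ t in s, f (gam i t) := by
  have h1 := (gam_iso i).map_hausdorffMeasure (d := 1) (Or.inl zero_le_one)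
  rw [hausdorffMeasure_real] at h1
  have hm : MeasurableSet (gam i '' s) := (hs.image (gam_iso i).continuous).measurableSet
  have h2 := setLIntegral_map (μ := volume) hm hf (gam_iso i).continuous.measurable
  rw [(gam_iso i).injective.preimage_image, h1, Measure.restrict_restrict hm,
    Set.inter_eq_left.2 (Set.image_subset_range _ _)] at h2
  exact h2

lemma hexL_compact : IsCompact hexL := by
  rw [hexL_eq]
  exact isCompact_iUnion fun i => isCompact_Icc.image (gam_iso i).continuous

lemma hexL_lt_top : (μH[1] : Measure E2) hexL < ∞ := by
  rw [hexL_eq]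
  refine (measure_iUnion_le _).trans_lt ?_
  simp [meas_image, tsum_fintype]

instance : IsFiniteMeasure hexP := by
  unfold hexP
  have : IsFiniteMeasure ((μH[1] : Measure E2).restrict hexL) :=
    ⟨by simpa using hexL_lt_top⟩
  exact Measure.smul_finite _ (by simp)

lemma integrable_aux (α : Set E2) :
    Integrable (fun x => Metric.infDist x α ^ 2) hexP := by
  have hc : Continuous fun x : E2 => Metric.infDist x α ^ 2 :=
    (Metric.continuous_infDist_pt α).pow 2
  obtain ⟨C, hC⟩ := hexL_compact.exists_bound_of_continuousOn hc.continuousOn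
  refine Integrable.of_bound hc.aestronglyMeasurable C ?_
  unfold hexP
  refine Measure.ae_smul_measure ?_ _
  filter_upwards [ae_restrict_mem hexL_compact.measurableSet] with x hx using hC x hx

lemma ofReal_int {α : Set E2} (hf : α.Finite) (hne : α.Nonempty) :
    ENNReal.ofReal (∫ x, sInf ((fun a => ‖x - a‖ ^ 2) '' α) ∂hexP) =
      6⁻¹ * ∫⁻ x in hexL, ENNReal.ofReal (Metric.infDist x α ^ 2) ∂(μH[1] : Measure E2) := by
  simp_rw [sInf_eq_infDist hf hne]
  rw [ofReal_integral_eq_lintegral_ofReal (integrable_aux α)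
    (Filter.Eventually.of_forall fun x => sq_nonneg _)]
  unfold hexP
  rw [lintegral_smul_measure, smul_eq_mul]

lemma meas_infDist (α : Set E2) : Measurable fun x : E2 => ENNReal.ofReal (Metric.infDist x α ^ 2) :=
  (((Metric.continuous_infDist_pt α).pow 2).measurable).ennreal_ofReal

/-! ### Upper bound -/

lemma upper {n k : ℕ} (hk : 0 < k) (hn : 6 * k ≤ n) : quantErr hexP n ≤ 1 / (12 * (k:ℝ) ^ 2) := by
  have hk' : (0:ℝ) < k := by exact_mod_cast hk
  let m : Fin k → ℝ := fun j => (2 * (j:ℝ) + 1) / (2 * k)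
  let F : Fin 6 × Fin k → E2 := fun p => gam p.1 (m p.2)
  let α : Set E2 := Set.range F
  have hf : α.Finite := Set.finite_range F
  have hne : α.Nonempty := ⟨F (0, ⟨0, hk⟩), Set.mem_range_self _⟩
  have hcard : α.ncard ≤ n := by
    have := Set.ncard_image_le (f := F) (s := Set.univ) Set.finite_univ
    rw [Set.image_univ, Set.ncard_univ] at this
    simp at this
    exact this.trans hn
  have hle : quantErr hexP n ≤ ∫ x, sInf ((fun a => ‖x - a‖ ^ 2) '' α) ∂hexP := by
    refine csInf_le ⟨0, ?_⟩ ⟨α, hf, hne, hcard, rfl⟩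
    rintro v ⟨β, hβ, hβn, -, rfl⟩
    refine integral_nonneg fun x => ?_
    simp only [sInf_eq_infDist hβ hβn]
    exact sq_nonneg _
  refine hle.trans ?_
  rw [← ENNReal.ofReal_le_ofReal_iff (by positivity), ofReal_int hf hne]
  have hsub : hexL ⊆ ⋃ p : Fin 6 × Fin k, gam p.1 '' Set.Icc ((p.2:ℝ) / k) (((p.2:ℝ) + 1) / k) := by
    rw [hexL_eq]
    intro z hz
    obtain ⟨i, t, ⟨h0, h1⟩, rfl⟩ := Set.mem_iUnion.1 hz
    rw [Set.mem_iUnion]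
    rcases h1.eq_or_lt with rfl | h1
    · refine ⟨(i, ⟨k - 1, by omega⟩), 1, ⟨?_, ?_⟩, rfl⟩
      · rw [div_le_one hk']; simp; 
      · rw [le_div_iff₀ hk']; simp
        have : ((k - 1 : ℕ) : ℝ) + 1 = k := by exact_mod_cast Nat.sub_add_cancel hk
        linarith
    · have hlt : ⌊t * k⌋₊ < k := by
        rw [Nat.floor_lt (by positivity)]; nlinarith
      refine ⟨(i, ⟨⌊t * k⌋₊, hlt⟩), t, ⟨?_, ?_⟩, rfl⟩
      · rw [div_le_iff₀ hk']; exact Nat.floor_le (by positivity)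
      · rw [le_div_iff₀ hk']; exact (Nat.lt_floor_add_one _).le
  have hpiece : ∀ p : Fin 6 × Fin k,
      ∫⁻ x in gam p.1 '' Set.Icc ((p.2:ℝ) / k) (((p.2:ℝ) + 1) / k),
        ENNReal.ofReal (Metric.infDist x α ^ 2) ∂(μH[1] : Measure E2)
      ≤ ENNReal.ofReal (1 / (12 * (k:ℝ) ^ 3)) := by
    rintro ⟨i, j⟩
    rw [lint_image _ _ isCompact_Icc _ (meas_infDist α)]
    have hc : Continuous fun t : ℝ => (t - m j) ^ 2 := by fun_prop
    have hjk : (j:ℝ) / k ≤ ((j:ℝ) + 1) / k := by gcongr; linarith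
    calc _ ≤ ∫⁻ t in Set.Icc ((j:ℝ) / k) (((j:ℝ) + 1) / k), ENNReal.ofReal ((t - m j) ^ 2) := by
          refine lintegral_mono fun t => ENNReal.ofReal_le_ofReal ?_
          have := Metric.infDist_le_dist_of_mem (x := gam i t) (Set.mem_range_self (f := F) (i, j))
          rw [show F (i, j) = gam i (m j) from rfl, (gam_iso i).dist_eq, Real.dist_eq] at this
          rw [← sq_abs (t - m j)]
          gcongr
          exact Metric.infDist_nonneg
      _ = ENNReal.ofReal (∫ t in Set.Icc ((j:ℝ) / k) (((j:ℝ) + 1) / k), (t - m j) ^ 2) := by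
          rw [ofReal_integral_eq_lintegral_ofReal]
          · exact hc.continuousOn.integrableOn_compact isCompact_Icc
          · exact Filter.Eventually.of_forall fun x => sq_nonneg _
      _ ≤ _ := by
          apply ENNReal.ofReal_le_ofReal
          rw [integral_Icc_eq_integral_Ioc, ← intervalIntegral.integral_of_le hjk,
            intervalIntegral.integral_comp_sub_right (fun x => x ^ 2), integral_pow]
          apply le_of_eq
          simp only [m]
          have hk0 : (k:ℝ) ≠ 0 := hk'.ne'
          have e1 : ((j:ℝ) + 1) / k - (2 * (j:ℝ) + 1) / (2 * k) = 1 / (2 * k) := by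
            field_simp; ring
          have e2 : (j:ℝ) / k - (2 * (j:ℝ) + 1) / (2 * k) = -(1 / (2 * k)) := by
            field_simp; ring
          rw [e1, e2]
          push_cast
          field_simp
          norm_num
  calc _ ≤ 6⁻¹ * ∑ p : Fin 6 × Fin k, ENNReal.ofReal (1 / (12 * (k:ℝ) ^ 3)) := by
        gcongr
        refine (lintegral_mono_set hsub).trans ((lintegral_iUnion_le _ _).trans ?_)
        rw [tsum_fintype]
        exact Finset.sum_le_sum fun p _ => hpiece p
    _ = _ := by
        have h6 : (6:ℝ≥0∞)⁻¹ = ENNReal.ofReal (6⁻¹) := by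
          rw [ENNReal.ofReal_inv_of_pos (by norm_num)]; norm_num
        rw [← ENNReal.ofReal_sum_of_nonneg (fun _ _ => by positivity), h6,
          ← ENNReal.ofReal_mul (by norm_num)]
        congr 1
        simp
        field_simp

/-! ### Lower bound -/

def Le (e : ℝ) : Set E2 := ⋃ i : Fin 6, gam i '' Set.Icc e (1 - e)

lemma Le_sub {e : ℝ} (he : 0 < e) : Le e ⊆ hexL := by
  rw [hexL_eq]
  exact Set.iUnion_mono fun i => Set.image_mono (Set.Icc_subset_Icc he.le (by linarith))

lemma Le_meas {e : ℝ} : MeasurableSet (Le e) := by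
  exact MeasurableSet.iUnion fun i => (isCompact_Icc.image (gam_iso i).continuous).measurableSet

lemma Le_vol {e : ℝ} (he : 0 < e) : (μH[1] : Measure E2) (Le e) = ENNReal.ofReal (6 - 12 * e) := by
  unfold Le
  rw [measure_iUnion]
  · simp only [meas_image, Real.volume_Icc, tsum_fintype]
    rw [Finset.sum_const, Finset.card_univ, Fintype.card_fin, ← ENNReal.ofReal_nsmul]
    congr 1
    simp; ring
  · intro i j hij
    rw [Function.onFun, Set.disjoint_left]
    rintro _ ⟨s, hs, rfl⟩ ⟨t, ht, h⟩
    have := sep hij (s := s) he ht.1 ht.2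
    rw [h, dist_self] at this
    linarith
  · exact fun i => (isCompact_Icc.image (gam_iso i).continuous).measurableSet

lemma ball_vol {e r : ℝ} (he : 0 < e) (hr : 2 * r ≤ e / 2) (a : E2) :
    (μH[1] : Measure E2) (Metric.ball a r ∩ Le e) ≤ ENNReal.ofReal (2 * r) := by
  by_cases hne : (Metric.ball a r ∩ Le e).Nonempty
  swap
  · rw [Set.not_nonempty_iff_eq_empty.1 hne]; simp
  obtain ⟨z, hz, hzL⟩ := hne
  obtain ⟨i, s, hs, rfl⟩ := Set.mem_iUnion.1 hzL
  have hsub : Metric.ball a r ∩ Le e ⊆ gam i '' (gam i ⁻¹' Metric.ball a r) := by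
    rintro w ⟨hw, hwL⟩
    obtain ⟨j, t, ht, rfl⟩ := Set.mem_iUnion.1 hwL
    by_cases hij : i = j
    · subst hij; exact ⟨t, hw, rfl⟩
    · exfalso
      have h1 := sep hij (s := s) he ht.1 ht.2
      have h2 := dist_triangle_right (gam i s) (gam j t) a
      rw [Metric.mem_ball] at hz hw
      linarith
  refine (measure_mono hsub).trans ?_
  rw [meas_image]
  refine (Real.volume_le_diam _).trans ?_
  refine Metric.ediam_le fun s hs t ht => ?_
  rw [← (gam_iso i).edist_eq, edist_dist]
  apply ENNReal.ofReal_le_ofReal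
  have h2 := dist_triangle_right (gam i s) (gam i t) a
  rw [Set.mem_preimage, Metric.mem_ball] at hs ht
  linarith

lemma lower_lint {α : Set E2} (hf : α.Finite) (hne : α.Nonempty) {n : ℕ} (hn : 0 < n)
    (hcard : α.ncard ≤ n) {e : ℝ} (he : 13 / n ≤ e) (he2 : e < 1 / 2) :
    ENNReal.ofReal ((6 - 12 * e) ^ 3 / (12 * (n:ℝ) ^ 2)) ≤
      ∫⁻ x in hexL, ENNReal.ofReal (Metric.infDist x α ^ 2) ∂(μH[1] : Measure E2) := by
  have hn' : (0:ℝ) < n := by exact_mod_cast hn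
  have he0 : 0 < e := lt_of_lt_of_le (by positivity) he
  set l := 6 - 12 * e with hl
  have hl0 : 0 < l := by rw [hl]; linarith
  set R := l / (2 * n) with hR
  have hR0 : 0 < R := by positivity
  have hRe : 2 * R ≤ e / 2 := by
    have : R ≤ 3 / n := by
      rw [hR, div_le_div_iff₀ (by positivity) hn']
      nlinarith
    have h2 : (13:ℝ) / n = 13 * (1 / n) := by ring
    have h3 : (3:ℝ) / n = 3 * (1 / n) := by ring
    have h4 : (0:ℝ) < 1 / n := by positivity
    linarith
  refine le_trans ?_ (lintegral_mono_set (Le_sub he0))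
  set ν := (μH[1] : Measure E2).restrict (Le e) with hν
  have key : ∀ t ∈ Set.Ioc 0 R, ENNReal.ofReal (l - 2 * n * t) ≤
      ν {x | t ≤ Metric.infDist x α} := by
    intro t ht
    have hu : ν Set.univ = ENNReal.ofReal l := by
      rw [hν, Measure.restrict_apply_univ, Le_vol he0]
    have hlt : ν {x | Metric.infDist x α < t} ≤ ENNReal.ofReal (2 * n * t) := by
      have hs : {x | Metric.infDist x α < t} ⊆ ⋃ a ∈ hf.toFinset, Metric.ball a t := by
        intro x hx
        obtain ⟨b, hb, h⟩ := (Metric.infDist_lt_iff hne).1 hx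
        simp only [Set.mem_iUnion]
        exact ⟨b, by simpa using hb, h⟩
      calc _ ≤ ∑ a ∈ hf.toFinset, ν (Metric.ball a t) :=
            (measure_mono hs).trans (measure_biUnion_finset_le _ _)
        _ ≤ ∑ a ∈ hf.toFinset, ENNReal.ofReal (2 * t) := by
            refine Finset.sum_le_sum fun a _ => ?_
            rw [hν, Measure.restrict_apply measurableSet_ball]
            exact ball_vol he0 (by linarith [ht.2]) a
        _ ≤ _ := by
            rw [Finset.sum_const, ← ENNReal.ofReal_nsmul, nsmul_eq_mul]
            apply ENNReal.ofReal_le_ofReal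
            rw [← Set.ncard_eq_toFinset_card α hf]
            have : (α.ncard : ℝ) ≤ n := by exact_mod_cast hcard
            nlinarith [ht.1]
    have hle : ν Set.univ ≤ ν {x | t ≤ Metric.infDist x α} + ν {x | Metric.infDist x α < t} := by
      refine (measure_mono ?_).trans (measure_union_le _ _)
      intro x _
      exact le_or_gt t _
    rw [ENNReal.ofReal_sub _ (by have := ht.1; positivity), tsub_le_iff_right, ← hu]
    exact hle.trans (by gcongr)
  have hcont : Continuous fun t : ℝ => (l - 2 * n * t) * t := by fun_prop
  have hnn : ∀ t ∈ Set.Ioc 0 R, 0 ≤ l - 2 * n * t := by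
    intro t ht
    have h1 := ht.2
    rw [hR, le_div_iff₀ (by positivity)] at h1
    linarith
  have hlc := lintegral_rpow_eq_lintegral_meas_le_mul ν
    (f := fun x => Metric.infDist x α) (Filter.Eventually.of_forall fun x => Metric.infDist_nonneg)
    (Metric.continuous_infDist_pt α).aemeasurable (p := 2) two_pos
  simp only [Real.rpow_two, show (2:ℝ) - 1 = 1 by norm_num, Real.rpow_one] at hlc
  rw [hlc]
  calc _ = ENNReal.ofReal 2 * ENNReal.ofReal (∫ t in Set.Ioc 0 R, (l - 2 * n * t) * t) := by
        rw [← ENNReal.ofReal_mul (by norm_num), ← intervalIntegral.integral_of_le hR0.le]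
        congr 1
        have : ∫ t in (0:ℝ)..R, (l - 2 * n * t) * t = l * (R ^ 2 / 2) - 2 * n * (R ^ 3 / 3) := by
          have : ∀ t : ℝ, (l - 2 * n * t) * t = l * t ^ 1 - 2 * n * t ^ 2 := fun t => by ring
          simp_rw [this]
          rw [intervalIntegral.integral_sub, intervalIntegral.integral_const_mul,
            intervalIntegral.integral_const_mul, integral_pow, integral_pow]
          · norm_num
          · exact Continuous.intervalIntegrable (by fun_prop) _ _
          · exact Continuous.intervalIntegrable (by fun_prop) _ _
        rw [this, hR]
        field_simp
        ring
    _ = ENNReal.ofReal 2 * ∫⁻ t in Set.Ioc 0 R, ENNReal.ofReal ((l - 2 * n * t) * t) := by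
        rw [ofReal_integral_eq_lintegral_ofReal]
        · exact (hcont.continuousOn.integrableOn_compact isCompact_Icc).mono_set
            Set.Ioc_subset_Icc_self
        · filter_upwards [ae_restrict_mem measurableSet_Ioc] with t ht
          exact mul_nonneg (hnn t ht) ht.1.le
    _ ≤ ENNReal.ofReal 2 * ∫⁻ t in Set.Ioc 0 R,
          ν {x | t ≤ Metric.infDist x α} * ENNReal.ofReal t := by
        gcongr 1
        refine setLIntegral_mono' measurableSet_Ioc fun t ht => ?_
        rw [ENNReal.ofReal_mul (hnn t ht)]
        gcongr
        exact key t ht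
    _ ≤ _ := by
        gcongr 1
        exact lintegral_mono_set Set.Ioc_subset_Ioi_self

lemma lower {n : ℕ} (hn : 26 < n) :
    (6 - 12 * (13 / n)) ^ 3 / (72 * (n:ℝ) ^ 2) ≤ quantErr hexP n := by
  have hn' : (26:ℝ) < n := by exact_mod_cast hn
  have he2 : (13:ℝ) / n < 1 / 2 := by
    rw [div_lt_div_iff₀ (by linarith) two_pos]; linarith
  refine le_csInf ⟨_, {0}, Set.finite_singleton _, Set.singleton_nonempty _, ?_, rfl⟩ ?_
  · simp; omega
  rintro v ⟨α, hf, hne, hcard, rfl⟩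
  have h := lower_lint hf hne (by omega) hcard le_rfl he2
  have hnn : 0 ≤ ∫ x, sInf ((fun a => ‖x - a‖ ^ 2) '' α) ∂hexP := by
    refine integral_nonneg fun x => ?_
    simp only [sInf_eq_infDist hf hne]
    exact sq_nonneg _
  rw [← ENNReal.ofReal_le_ofReal_iff hnn, ofReal_int hf hne]
  have h6 : (6:ℝ≥0∞)⁻¹ = ENNReal.ofReal (6⁻¹) := by
    rw [ENNReal.ofReal_inv_of_pos (by norm_num)]; norm_num
  refine le_trans ?_ (mul_le_mul_right h _)
  rw [h6, ← ENNReal.ofReal_mul (by norm_num)]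
  apply ENNReal.ofReal_le_ofReal
  apply le_of_eq
  have : (n:ℝ) ≠ 0 := by positivity
  field_simp
  ring

/-- The one-dimensional quantization coefficient of the uniform distribution on
the hexagon boundary exists and equals `3`: `lim_{n→∞} n² Vₙ(P) = 3`. -/
theorem stmt_9 :
    Tendsto (fun n : ℕ => (n : ℝ) ^ 2 * quantErr hexP n) atTop (nhds 3) := by
  have hinv : Tendsto (fun n : ℕ => (1:ℝ) / n) atTop (nhds 0) :=
    tendsto_const_div_atTop_nhds_zero_nat 1
  have h1 : Tendsto (fun n : ℕ => (6 - 12 * (13 * ((1:ℝ) / n))) ^ 3 / 72) atTop (nhds 3) := by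
    have := (((hinv.const_mul 13).const_mul 12).const_sub 6).pow 3 |>.div_const 72
    convert this using 2
    norm_num
  have h2 : Tendsto (fun n : ℕ => 3 / (1 - 5 * ((1:ℝ) / n)) ^ 2) atTop (nhds 3) := by
    have h := ((hinv.const_mul 5).const_sub 1).pow 2
    have := (tendsto_const_nhds (x := (3:ℝ))).div h (by norm_num)
    convert this using 2
    all_goals norm_num
  refine tendsto_of_tendsto_of_tendsto_of_le_of_le' h1 h2 ?_ ?_
  · filter_upwards [eventually_gt_atTop 26] with n hn
    have hn' : (26:ℝ) < n := by exact_mod_cast hn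
    have h0 : (n:ℝ) ≠ 0 := by positivity
    refine le_trans (le_of_eq ?_) (mul_le_mul_of_nonneg_left (lower hn) (sq_nonneg _))
    field_simp
  · filter_upwards [eventually_gt_atTop 26] with n hn
    have hn' : (26:ℝ) < n := by exact_mod_cast hn
    have h0 : (n:ℝ) ≠ 0 := by positivity
    have hk : 0 < n / 6 := by omega
    refine (mul_le_mul_of_nonneg_left (upper (n := n) hk (by omega)) (sq_nonneg _)).trans ?_
    have hk2 : (n:ℝ) - 5 ≤ 6 * ((n / 6 : ℕ) : ℝ) := by
      have : n ≤ 6 * (n / 6) + 5 := by omega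
      have : (n:ℝ) ≤ 6 * ((n / 6 : ℕ) : ℝ) + 5 := by exact_mod_cast this
      linarith
    have e1 : 3 / (1 - 5 * ((1:ℝ) / n)) ^ 2 = 3 * (n:ℝ) ^ 2 / ((n:ℝ) - 5) ^ 2 := by
      have : (1 - 5 * ((1:ℝ) / n)) = ((n:ℝ) - 5) / n := by field_simp
      rw [this, div_pow, div_div_eq_mul_div]
    rw [e1, mul_one_div, div_le_div_iff₀ (by positivity) (by
      have : 0 < (n:ℝ) - 5 := by linarith
      positivity)]
    have h5 : ((n:ℝ) - 5) ^ 2 ≤ (6 * ((n / 6 : ℕ) : ℝ)) ^ 2 :=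
      pow_le_pow_left₀ (by linarith) hk2 2
    nlinarith [sq_nonneg (n:ℝ)]
end
end

section
/- Let P be the uniform probability distribution on the full unit circle S = {(cos θ, sin θ) : 0 ≤ θ ≤ 2π}. Then for every n ∈ ℕ the nth quantization error is Vₙ(P) = 1 − (n²/π²) sin²(π/n), and consequently the one-dimensional quantization coefficient of P equals π²/3, i.e., lim_{n→∞} n² Vₙ(P) = π²/3. -/
open MeasureTheory Real Filter
open scoped ENNReal

noncomputable section

/-- The arc `{(cos θ, sin θ) : a ≤ θ ≤ b}` of the unit circle. -/
def arcS (a b : ℝ) : Set E2 :=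
  {p | ∃ θ : ℝ, a ≤ θ ∧ θ ≤ b ∧ p = pt (Real.cos θ) (Real.sin θ)}

/-- The uniform probability distribution on the arc `arcS a b`: density
`1/(b-a)` with respect to one-dimensional Hausdorff (arc-length) measure. -/
def arcP (a b : ℝ) : Measure E2 :=
  (ENNReal.ofReal (b - a))⁻¹ • (μH[1] : Measure E2).restrict (arcS a b)

def fc (θ : ℝ) : E2 := pt (Real.cos θ) (Real.sin θ)

lemma norm_sq_sub (θ : ℝ) (a : E2) :
    ‖fc θ - a‖ ^ 2 = 1 + (a 0 ^ 2 + a 1 ^ 2) - 2 * (Real.cos θ * a 0 + Real.sin θ * a 1) := by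
  rw [EuclideanSpace.norm_sq_eq]
  simp [fc, pt, Fin.sum_univ_two]
  nlinarith [Real.sin_sq_add_cos_sq θ]

lemma fc_dist (x y : ℝ) : ‖fc x - fc y‖ = 2 * |Real.sin ((x - y) / 2)| := by
  have h : ‖fc x - fc y‖ ^ 2 = (2 * |Real.sin ((x - y) / 2)|) ^ 2 := by
    rw [norm_sq_sub, mul_pow, sq_abs, Real.sin_sq_eq_half_sub]
    have : 2 * ((x - y) / 2) = x - y := by ring
    rw [this, Real.cos_sub]
    simp [fc, pt]
    ring
  exact (pow_left_inj₀ (norm_nonneg _) (by positivity) two_ne_zero).1 h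

lemma fc_cont : Continuous fc := by
  unfold fc pt
  fun_prop

lemma fc_lip : LipschitzWith 1 fc := by
  refine LipschitzWith.of_dist_le_mul fun x y => ?_
  rw [dist_eq_norm, fc_dist, Real.dist_eq]
  have := Real.abs_sin_le_abs (x := (x - y) / 2)
  rw [abs_div] at this
  simp at this ⊢
  linarith

lemma fc_inj : Set.InjOn fc (Set.Ico 0 (2 * π)) := by
  intro x hx y hy h
  have h0 : ‖fc x - fc y‖ = 0 := by rw [h]; simp
  rw [fc_dist] at h0
  have h1 : Real.sin ((x - y) / 2) = 0 := by simpa using h0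
  rw [Real.sin_eq_zero_iff_of_lt_of_lt] at h1
  · linarith
  · linarith [hx.1, hx.2, hy.1, hy.2]
  · linarith [hx.1, hx.2, hy.1, hy.2]

lemma sin_abs_lower {u η : ℝ} (hu : |u| ≤ η) (hη : η ≤ 1) :
    (1 - η ^ 2) * |u| ≤ |Real.sin u| := by
  wlog h : 0 ≤ u with H
  · have := @H (-u) η (by simpa using hu) hη (by linarith)
    simpa using this
  rcases h.eq_or_lt with h | h
  · subst h; simp
  rw [abs_of_pos h] at hu ⊢
  have := Real.sin_gt_sub_cube h
  refine le_trans ?_ (le_abs_self _)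
  have h2 : u ^ 2 ≤ η ^ 2 := by gcongr
  nlinarith [mul_le_mul_of_nonneg_left h2 h.le, pow_pos h 3]

lemma arc_small {a b η : ℝ} (hab : a ≤ b) (hb : b - a ≤ 2 * η) (hη : η < 1) (_h0 : 0 < η) :
    ENNReal.ofReal ((1 - η ^ 2) * (b - a)) ≤ μH[1] (fc '' Set.Ico a b) := by
  have hpos : 0 < 1 - η ^ 2 := by nlinarith
  have key : ∀ x ∈ Set.Ico a b, ∀ y ∈ Set.Ico a b, (1 - η ^ 2) * |x - y| ≤ ‖fc x - fc y‖ := by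
    intro x hx y hy
    rw [fc_dist]
    have h1 : |(x - y) / 2| ≤ η := by
      rw [abs_le]; constructor <;> linarith [hx.1, hx.2, hy.1, hy.2]
    have := sin_abs_lower h1 hη.le
    rw [abs_div] at this
    simp at this
    linarith
  have inj : Set.InjOn fc (Set.Ico a b) := by
    intro x hx y hy h
    have := key x hx y hy
    rw [h] at this
    simp at this
    have h2 : |x - y| ≤ 0 := by nlinarith [abs_nonneg (x - y)]
    have := abs_nonpos_iff.1 h2
    linarith
  let g := Function.invFunOn fc (Set.Ico a b)
  have hg : Set.LeftInvOn g fc (Set.Ico a b) := inj.leftInvOn_invFunOn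
  let K : NNReal := ⟨(1 - η ^ 2)⁻¹, by positivity⟩
  have hL : LipschitzOnWith K g (fc '' Set.Ico a b) := by
    refine LipschitzOnWith.of_dist_le_mul ?_
    rintro _ ⟨x, hx, rfl⟩ _ ⟨y, hy, rfl⟩
    rw [hg hx, hg hy, Real.dist_eq, dist_eq_norm]
    change _ ≤ (1 - η ^ 2)⁻¹ * _
    rw [inv_mul_eq_div, le_div_iff₀ hpos, mul_comm]
    exact key x hx y hy
  have h3 := hL.hausdorffMeasure_image_le (d := 1) (by norm_num)
  rw [hg.image_image, hausdorffMeasure_real, Real.volume_Ico, ENNReal.rpow_one] at h3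
  rw [ENNReal.ofReal_mul hpos.le]
  calc _ ≤ ENNReal.ofReal (1 - η ^ 2) * (K * μH[1] (fc '' Set.Ico a b)) := by gcongr
    _ = μH[1] (fc '' Set.Ico a b) := by
      rw [← mul_assoc]
      have : (K : ℝ≥0∞) = ENNReal.ofReal (1 - η ^ 2)⁻¹ := by
        rw [ENNReal.ofReal, ← Real.toNNReal_coe (r := K)]; rfl
      rw [this, ← ENNReal.ofReal_mul hpos.le, mul_inv_cancel₀ hpos.ne']
      simp

lemma arc_total_lower : ENNReal.ofReal (2 * π) ≤ μH[1] (fc '' Set.Ico 0 (2 * π)) := by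
  have hlim : Tendsto (fun N : ℕ => ENNReal.ofReal ((1 - (π / N) ^ 2) * (2 * π))) atTop
      (nhds (ENNReal.ofReal (2 * π))) := by
    apply ENNReal.tendsto_ofReal
    have h := (tendsto_const_div_atTop_nhds_zero_nat π)
    have := ((h.pow 2).const_sub 1).mul_const (2 * π)
    simpa using this
  refine le_of_tendsto hlim ?_
  filter_upwards [eventually_gt_atTop 4] with N hN
  have hN' : (4 : ℝ) < N := by exact_mod_cast hN
  have hη : π / N < 1 := by
    rw [div_lt_one (by linarith)]; linarith [Real.pi_lt_four]
  have hη0 : 0 < π / N := by have := Real.pi_pos; positivity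
  have main : ∀ k : ℕ, k ≤ N → ENNReal.ofReal ((1 - (π / N) ^ 2) * (k * (2 * (π / N)))) ≤
      μH[1] (fc '' Set.Ico 0 (k * (2 * (π / N)))) := by
    intro k
    induction k with
    | zero => intro _; simp
    | succ k ih =>
      intro hk
      have ih := ih (by omega)
      have hk' : ((k : ℝ) + 1) ≤ N := by exact_mod_cast hk
      have hle : ((k : ℝ) + 1) * (2 * (π / N)) ≤ 2 * π := by
        calc _ ≤ (N : ℝ) * (2 * (π / N)) := by gcongr
          _ = 2 * π := by field_simp
      have hsm := arc_small (a := k * (2 * (π / N))) (b := (k + 1) * (2 * (π / N)))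
        (η := π / N) (by nlinarith) (by linarith) hη hη0
      push_cast
      have hk0 : 0 ≤ (k : ℝ) * (2 * (π / N)) := by positivity
      have hk1 : (k : ℝ) * (2 * (π / N)) ≤ (k + 1) * (2 * (π / N)) := by nlinarith
      have hu : Set.Ico 0 (((k : ℝ) + 1) * (2 * (π / N))) =
          Set.Ico 0 (k * (2 * (π / N))) ∪ Set.Ico (k * (2 * (π / N))) ((k + 1) * (2 * (π / N))) :=
        (Set.Ico_union_Ico_eq_Ico hk0 hk1).symm
      have hs1 : Set.Ico 0 (k * (2 * (π / N))) ⊆ Set.Ico 0 (2 * π) :=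
        Set.Ico_subset_Ico le_rfl (by linarith)
      have hs2 : Set.Ico (k * (2 * (π / N))) ((k + 1) * (2 * (π / N))) ⊆ Set.Ico 0 (2 * π) :=
        Set.Ico_subset_Ico hk0 hle
      rw [hu, Set.image_union, measure_union]
      · calc _ = ENNReal.ofReal ((1 - (π / N) ^ 2) * (k * (2 * (π / N)))) +
            ENNReal.ofReal ((1 - (π / N) ^ 2) * ((k + 1) * (2 * (π / N)) - k * (2 * (π / N)))) := by
              have h1 : 0 ≤ 1 - (π / N) ^ 2 := by nlinarith
              rw [← ENNReal.ofReal_add]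
              · congr 1; ring
              · positivity
              · exact mul_nonneg h1 (by linarith)
          _ ≤ _ := by gcongr
      · rw [Set.disjoint_iff_forall_ne]
        rintro _ ⟨x, hx, rfl⟩ _ ⟨y, hy, rfl⟩ h
        have := fc_inj (hs1 hx) (hs2 hy) h
        linarith [hx.2, hy.1]
      · exact measurableSet_Ico.image_of_continuousOn_injOn fc_cont.continuousOn (fc_inj.mono hs2)
  have := main N le_rfl
  have e : (N : ℝ) * (2 * (π / N)) = 2 * π := by field_simp
  rwa [e] at this

lemma arc_eq : arcS 0 (2 * π) = fc '' Set.Ico 0 (2 * π) := by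
  ext p
  constructor
  · rintro ⟨θ, h0, h1, rfl⟩
    rcases h1.eq_or_lt with h | h
    · exact ⟨0, ⟨le_rfl, by positivity⟩, by simp [fc, h]⟩
    · exact ⟨θ, ⟨h0, h⟩, rfl⟩
  · rintro ⟨θ, h, rfl⟩
    exact ⟨θ, h.1, h.2.le, rfl⟩

lemma hm_eq : (μH[1] : Measure E2).restrict (arcS 0 (2 * π)) =
    (volume.restrict (Set.Ico 0 (2 * π))).map fc := by
  have hle : (μH[1] : Measure E2).restrict (arcS 0 (2 * π)) ≤
      (volume.restrict (Set.Ico 0 (2 * π))).map fc := by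
    refine Measure.le_iff.2 fun B hB => ?_
    rw [Measure.restrict_apply hB, Measure.map_apply fc_cont.measurable hB,
      Measure.restrict_apply (fc_cont.measurable hB), arc_eq]
    have : B ∩ fc '' Set.Ico 0 (2 * π) = fc '' (fc ⁻¹' B ∩ Set.Ico 0 (2 * π)) := by
      rw [Set.image_preimage_inter]
    rw [this]
    have := fc_lip.hausdorffMeasure_image_le (d := 1) (by norm_num) (fc ⁻¹' B ∩ Set.Ico 0 (2 * π))
    simpa [hausdorffMeasure_real] using this
  have : IsFiniteMeasure ((volume.restrict (Set.Ico 0 (2 * π))).map fc) := by infer_instance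
  have hf : IsFiniteMeasure ((μH[1] : Measure E2).restrict (arcS 0 (2 * π))) :=
    isFiniteMeasure_of_le _ hle
  refine Measure.eq_of_le_of_measure_univ_eq hle (le_antisymm (hle _) ?_)
  rw [Measure.map_apply fc_cont.measurable MeasurableSet.univ]
  simp only [Set.preimage_univ, Measure.restrict_apply_univ, Real.volume_Ico, sub_zero]
  rw [arc_eq]
  exact arc_total_lower

def mf (α : Set E2) (x : E2) : ℝ := sInf ((fun a => ‖x - a‖ ^ 2) '' α)

lemma mf_cont (α : Set E2) (hf : α.Finite) (hn : α.Nonempty) : Continuous (mf α) := by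
  have hn' : hf.toFinset.Nonempty := by simpa using hn
  have : mf α = fun x => hf.toFinset.inf' hn' (fun a => ‖x - a‖ ^ 2) := by
    ext x
    rw [Finset.inf'_eq_csInf_image]
    simp [mf]
  rw [this]
  exact Continuous.finset_inf'_apply hn' (fun a _ => by fun_prop)

lemma integral_arc (α : Set E2) (hf : α.Finite) (hn : α.Nonempty) :
    ∫ x, sInf ((fun a => ‖x - a‖ ^ 2) '' α) ∂(arcP 0 (2 * π)) =
      (2 * π)⁻¹ * ∫ θ in (0 : ℝ)..(2 * π), mf α (fc θ) := by
  change ∫ x, mf α x ∂_ = _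
  rw [arcP, hm_eq, integral_smul_measure, integral_map fc_cont.aemeasurable
    (mf_cont α hf hn).aestronglyMeasurable, intervalIntegral.integral_of_le (by positivity),
    integral_Ico_eq_integral_Ioc, smul_eq_mul, sub_zero]
  congr 1
  rw [ENNReal.toReal_inv, ENNReal.toReal_ofReal (by positivity)]

lemma q_deriv (A B t : ℝ) : HasDerivAt (fun t => A * t + B * t ^ 2 - Real.sin t ^ 2)
    (A + 2 * B * t - 2 * (Real.sin t * Real.cos t)) t := by
  have := (((hasDerivAt_id t).const_mul A).add (((hasDerivAt_id t).pow 2).const_mul B)).sub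
    ((Real.hasDerivAt_sin t).pow 2)
  convert! this using 1
  simp; ring

lemma q_deriv2 (A B t : ℝ) : HasDerivAt (fun t => A + 2 * B * t - 2 * (Real.sin t * Real.cos t))
    (2 * B - 2 + 4 * Real.sin t ^ 2) t := by
  have := ((((hasDerivAt_id t).const_mul (2 * B))).const_add A).sub
    (((Real.hasDerivAt_sin t).mul (Real.hasDerivAt_cos t)).const_mul 2)
  convert! this using 1
  simp; nlinarith [Real.sin_sq_add_cos_sq t]

lemma q_it (A B t : ℝ) : deriv^[2] (fun t => A * t + B * t ^ 2 - Real.sin t ^ 2) t =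
    2 * B - 2 + 4 * Real.sin t ^ 2 := by
  have h1 : deriv (fun t => A * t + B * t ^ 2 - Real.sin t ^ 2) =
    fun t => A + 2 * B * t - 2 * (Real.sin t * Real.cos t) := funext fun t => (q_deriv A B t).deriv
  simp only [Function.iterate_succ, Function.iterate_zero, Function.comp, id]
  rw [h1, (q_deriv2 A B t).deriv]

lemma q_concave (A B a b : ℝ) (h : ∀ t ∈ Set.Icc a b, 2 * B - 2 + 4 * Real.sin t ^ 2 ≤ 0) :
    ConcaveOn ℝ (Set.Icc a b) (fun t => A * t + B * t ^ 2 - Real.sin t ^ 2) := by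
  refine concaveOn_of_deriv2_nonpos' (convex_Icc a b) ?_ ?_ ?_
  · exact fun t _ => (q_deriv A B t).differentiableAt.differentiableWithinAt
  · have h1 : deriv (fun t => A * t + B * t ^ 2 - Real.sin t ^ 2) =
      fun t => A + 2 * B * t - 2 * (Real.sin t * Real.cos t) := funext fun t => (q_deriv A B t).deriv
    rw [h1]
    exact fun t _ => (q_deriv2 A B t).differentiableAt.differentiableWithinAt
  · intro t ht
    rw [q_it]; exact h t ht

lemma q_convex (A B a b : ℝ) (h : ∀ t ∈ Set.Icc a b, 0 ≤ 2 * B - 2 + 4 * Real.sin t ^ 2) :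
    ConvexOn ℝ (Set.Icc a b) (fun t => A * t + B * t ^ 2 - Real.sin t ^ 2) := by
  refine convexOn_of_deriv2_nonneg' (convex_Icc a b) ?_ ?_ ?_
  · exact fun t _ => (q_deriv A B t).differentiableAt.differentiableWithinAt
  · have h1 : deriv (fun t => A * t + B * t ^ 2 - Real.sin t ^ 2) =
      fun t => A + 2 * B * t - 2 * (Real.sin t * Real.cos t) := funext fun t => (q_deriv A B t).deriv
    rw [h1]
    exact fun t _ => (q_deriv2 A B t).differentiableAt.differentiableWithinAt
  · intro t ht
    rw [q_it]; exact h t ht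

set_option maxHeartbeats 1000000 in
lemma tangent {τ : ℝ} (h0 : 0 < τ) (h1 : τ ≤ π / 2) : ∃ A B : ℝ, 0 ≤ A ∧
    (∀ t ∈ Set.Icc 0 π, Real.sin t ^ 2 ≤ A * t + B * t ^ 2) ∧
    A * τ + B * τ ^ 2 = Real.sin τ ^ 2 ∧ A * (π - τ) = (π - τ) * (2 * (Real.sin τ / τ) * (Real.sin τ - τ * Real.cos τ)) := by
  obtain ⟨R, hR⟩ : ∃ R, R = Real.sin τ / τ := ⟨_, rfl⟩
  have hpi := Real.pi_pos
  have hs : Real.sin τ = R * τ := by rw [hR]; field_simp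
  have hspos : 0 < Real.sin τ := Real.sin_pos_of_pos_of_lt_pi h0 (by linarith)
  have hR0 : 0 < R := by rw [hR]; positivity
  have hR1 : R ≤ 1 := by rw [hR, div_le_one h0]; exact Real.sin_le h0.le
  have hc0 : 0 ≤ Real.cos τ := Real.cos_nonneg_of_mem_Icc ⟨by linarith, h1⟩
  have hcR : Real.cos τ ≤ R := by
    rw [hR, le_div_iff₀ h0]
    rcases h1.eq_or_lt with h | h
    · rw [h]; simp
    · have := Real.le_tan h0.le h
      rw [Real.tan_eq_sin_div_cos, le_div_iff₀ (Real.cos_pos_of_mem_Ioo ⟨by linarith, h⟩)] at this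
      linarith
  have hRsc : R - Real.cos τ ≤ Real.sin τ := by
    by_cases h : 1 ≤ τ
    · nlinarith
    · have := Real.one_sub_sq_div_two_le_cos (x := τ)
      nlinarith
  have hsc := Real.sin_sq_add_cos_sq τ
  obtain ⟨A, hA⟩ : ∃ A, A = 2 * R * (R - Real.cos τ) * τ := ⟨_, rfl⟩
  obtain ⟨B, hB⟩ : ∃ B, B = R * (2 * Real.cos τ - R) := ⟨_, rfl⟩
  have hA0 : 0 ≤ A := by
    rw [hA]; have : 0 ≤ R - Real.cos τ := by linarith
    positivity
  have hB1 : B ≤ 1 := by rw [hB]; nlinarith [sq_nonneg (R - Real.cos τ), sq_nonneg (Real.sin τ)]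
  have hBτ : 0 ≤ 2 * B - 2 + 4 * Real.sin τ ^ 2 := by
    have : (R - Real.cos τ) ^ 2 ≤ Real.sin τ ^ 2 := by
      have : 0 ≤ R - Real.cos τ := by linarith
      gcongr
    rw [hB]; nlinarith
  have hBm : -1 ≤ B := by
    rw [hB]; nlinarith [mul_nonneg hR0.le hc0]
  have hqτ : A * τ + B * τ ^ 2 = Real.sin τ ^ 2 := by rw [hA, hB, hs]; ring
  have hqπ : 0 ≤ A * π + B * π ^ 2 := by
    have hj := Real.one_sub_mul_le_cos h0.le h1
    have e : A + B * π = R * (2 * (π - τ) * Real.cos τ - (π - 2 * τ) * R) := by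
      rw [hA, hB]; ring
    have h2 : (π - 2 * τ) ≤ 2 * (π - τ) * Real.cos τ := by
      have h3 : 2 * (π - τ) * (1 - 2 / π * τ) ≤ 2 * (π - τ) * Real.cos τ := by
        apply mul_le_mul_of_nonneg_left hj; linarith
      have h4 : 2 * (π - τ) * (1 - 2 / π * τ) = 2 * (π - τ) / π * (π - 2 * τ) := by field_simp
      have h5 : 1 ≤ 2 * (π - τ) / π := by rw [le_div_iff₀ hpi]; linarith
      nlinarith
    have h6 : (π - 2 * τ) * R ≤ π - 2 * τ := by nlinarith
    have h7 : 0 ≤ A + B * π := by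
      rw [e]; apply mul_nonneg hR0.le; linarith
    nlinarith
  refine ⟨A, B, hA0, ?_, hqτ, ?_⟩
  · obtain ⟨β, hβ⟩ : ∃ β, β = √((1 - B) / 2) := ⟨_, rfl⟩
    have hβ0 : 0 ≤ β := by rw [hβ]; positivity
    have hβ2 : β ^ 2 = (1 - B) / 2 := by rw [hβ, Real.sq_sqrt]; linarith
    have hβ1 : β ≤ 1 := by nlinarith
    obtain ⟨c, hc⟩ : ∃ c, c = Real.arcsin β := ⟨_, rfl⟩
    have hsinc : Real.sin c = β := by rw [hc, Real.sin_arcsin (by linarith) hβ1]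
    have hc0 : 0 ≤ c := by rw [hc]; exact Real.arcsin_nonneg.2 hβ0
    have hc1 : c ≤ π / 2 := by rw [hc]; exact Real.arcsin_le_pi_div_two _
    have hβτ : β ≤ Real.sin τ := by
      apply le_of_sq_le_sq _ hspos.le
      linarith
    have hcτ : c ≤ τ := by
      rw [hc]; exact (Real.arcsin_le_iff_le_sin ⟨by linarith, hβ1⟩ ⟨by linarith, h1⟩).2 hβτ
    have low : ∀ t ∈ Set.Icc 0 c, Real.sin t ≤ β := fun t ht => by
      rw [← hsinc]
      exact Real.sin_le_sin_of_le_of_le_pi_div_two (by linarith [ht.1]) hc1 ht.2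
    have low' : ∀ t ∈ Set.Icc (π - c) π, Real.sin t ≤ β := fun t ht => by
      rw [← Real.sin_pi_sub]
      exact low _ ⟨by linarith [ht.2], by linarith [ht.1]⟩
    have mid : ∀ t ∈ Set.Icc c (π - c), β ≤ Real.sin t := fun t ht => by
      rw [← hsinc]
      rcases le_total t (π / 2) with h | h
      · exact Real.sin_le_sin_of_le_of_le_pi_div_two (by linarith) h ht.1
      · rw [← Real.sin_pi_sub t]
        exact Real.sin_le_sin_of_le_of_le_pi_div_two (by linarith) (by linarith) (by linarith [ht.2])
    have cv1 := q_concave A B 0 c (fun t ht => by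
      have h1 := low t ht
      have h2 : 0 ≤ Real.sin t := Real.sin_nonneg_of_nonneg_of_le_pi ht.1 (by linarith [ht.2])
      nlinarith)
    have cv3 := q_concave A B (π - c) π (fun t ht => by
      have h1 := low' t ht
      have h2 : 0 ≤ Real.sin t := Real.sin_nonneg_of_nonneg_of_le_pi (by linarith [ht.1]) ht.2
      nlinarith)
    have cv2 := q_convex A B c (π - c) (fun t ht => by
      have h1 := mid t ht
      nlinarith)
    obtain ⟨q, hq⟩ : ∃ q : ℝ → ℝ, q = fun t => A * t + B * t ^ 2 - Real.sin t ^ 2 := ⟨_, rfl⟩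
    have hdq : HasDerivAt q 0 τ := by
      have := q_deriv A B τ
      rw [← hq] at this
      convert this using 1
      rw [hA, hB, hs]; ring
    rw [← hq] at cv1 cv2 cv3
    have hqτ0 : q τ = 0 := by rw [hq]; simp only []; linarith
    have q2 : ∀ t ∈ Set.Icc c (π - c), 0 ≤ q t := by
      intro t ht
      have hτm : τ ∈ Set.Icc c (π - c) := ⟨hcτ, by linarith⟩
      rcases lt_trichotomy t τ with h | h | h
      · have := cv2.slope_le_of_hasDerivAt ht hτm h hdq
        rw [slope_def_field, hqτ0, div_le_iff₀ (by linarith)] at this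
        linarith
      · rw [h, hqτ0]
      · have := cv2.le_slope_of_hasDerivAt hτm ht h hdq
        rw [slope_def_field, hqτ0, le_div_iff₀ (by linarith)] at this
        linarith
    have hqc := q2 c ⟨le_rfl, by linarith⟩
    have hqc' := q2 (π - c) ⟨by linarith, le_rfl⟩
    have q0 : q 0 = 0 := by rw [hq]; simp
    have qpi : 0 ≤ q π := by rw [hq]; simpa using hqπ
    have all : ∀ t ∈ Set.Icc 0 π, 0 ≤ q t := by
      intro t ht
      rcases le_total t c with h | h
      · have := cv1.min_le_of_mem_Icc ⟨le_rfl, hc0⟩ ⟨hc0, le_rfl⟩ ⟨ht.1, h⟩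
        exact le_trans (le_min q0.ge hqc) this
      rcases le_total t (π - c) with h' | h'
      · exact q2 t ⟨h, h'⟩
      · have := cv3.min_le_of_mem_Icc ⟨le_rfl, by linarith⟩ ⟨by linarith, le_rfl⟩ ⟨h', ht.2⟩
        exact le_trans (le_min hqc' qpi) this
    intro t ht
    have := all t ht
    rw [hq] at this
    simp only [] at this
    linarith
  · rw [← hR, hs, hA]; ring

lemma exists_AB (n : ℕ) (hn : 1 ≤ n) : ∃ A B : ℝ, 0 ≤ A ∧
    (∀ t ∈ Set.Icc 0 π, Real.sin t ^ 2 ≤ A * t + B * t ^ 2) ∧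
    n * A + π * B = n ^ 2 * Real.sin (π / n) ^ 2 / π := by
  have hpi := Real.pi_pos
  rcases hn.eq_or_lt with h | h
  · obtain ⟨A, B, h0, h1, h2, h3⟩ := tangent (τ := π / 2) (by positivity) le_rfl
    refine ⟨A, B, h0, h1, ?_⟩
    subst h
    simp at h2 h3 ⊢
    have h4 : π - π / 2 = π / 2 := by ring
    rw [h4] at h3
    have hA : A = 4 / π := by
      field_simp at h3 ⊢
      nlinarith
    subst hA
    field_simp at h2 ⊢
    nlinarith
  · have hn0 : (2 : ℝ) ≤ n := by exact_mod_cast h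
    have hn1 : (n : ℝ) ≠ 0 := by linarith
    obtain ⟨A, B, h0, h1, h2, -⟩ := tangent (τ := π / n) (by positivity) (by gcongr)
    refine ⟨A, B, h0, h1, ?_⟩
    rw [← h2]
    field_simp

lemma posint (r c : ℝ) (hr : 0 ≤ r) : ∃ t ∈ Set.Icc 0 π,
    ∫ x in (-π)..π, max (2 * r * Real.cos x - c) 0 = 2 * (2 * r * Real.sin t - c * t) := by
  have hpi := Real.pi_pos
  have int0 : ∀ a b : ℝ, ∫ x in a..b, (2 * r * Real.cos x - c) =
      2 * r * (Real.sin b - Real.sin a) - c * (b - a) := by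
    intro a b
    rw [intervalIntegral.integral_sub (by apply Continuous.intervalIntegrable; fun_prop) (by simp),
      intervalIntegral.integral_const_mul, integral_cos]
    simp; ring
  have hci : ∀ a b : ℝ, IntervalIntegrable (fun x => max (2 * r * Real.cos x - c) 0) volume a b :=
    fun a b => by apply Continuous.intervalIntegrable; fun_prop
  by_cases h1 : c ≤ -(2 * r)
  · refine ⟨π, ⟨hpi.le, le_rfl⟩, ?_⟩
    have : ∀ x, max (2 * r * Real.cos x - c) 0 = 2 * r * Real.cos x - c := fun x =>
      max_eq_left (by nlinarith [Real.neg_one_le_cos x])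
    simp only [this, int0]
    simp; ring
  by_cases h2 : 2 * r ≤ c
  · refine ⟨0, ⟨le_rfl, hpi.le⟩, ?_⟩
    have : ∀ x, max (2 * r * Real.cos x - c) 0 = 0 := fun x =>
      max_eq_right (by nlinarith [Real.cos_le_one x])
    simp only [this]
    simp
  push Not at h1 h2
  have hr0 : 0 < r := by linarith
  obtain ⟨t, ht⟩ : ∃ t, t = Real.arccos (c / (2 * r)) := ⟨_, rfl⟩
  have hct : 2 * r * Real.cos t = c := by
    rw [ht, Real.cos_arccos]
    · field_simp
    · rw [le_div_iff₀ (by positivity)]; linarith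
    · rw [div_le_iff₀ (by positivity)]; linarith
  have ht0 : 0 ≤ t := ht ▸ Real.arccos_nonneg _
  have htp : t ≤ π := ht ▸ Real.arccos_le_pi _
  refine ⟨t, ⟨ht0, htp⟩, ?_⟩
  rw [← intervalIntegral.integral_add_adjacent_intervals (hci (-π) (-t)) (hci (-t) π),
    ← intervalIntegral.integral_add_adjacent_intervals (hci (-t) t) (hci t π)]
  have e1 : ∫ x in (-π)..(-t), max (2 * r * Real.cos x - c) 0 = ∫ x in (-π)..(-t), (0 : ℝ) := by
    apply intervalIntegral.integral_congr
    intro x hx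
    rw [Set.uIcc_of_le (by linarith)] at hx
    apply max_eq_right
    have := Real.cos_le_cos_of_nonneg_of_le_pi ht0 (by linarith [hx.1] : -x ≤ π) (by linarith [hx.2])
    rw [Real.cos_neg] at this
    nlinarith
  have e3 : ∫ x in t..π, max (2 * r * Real.cos x - c) 0 = ∫ x in t..π, (0 : ℝ) := by
    apply intervalIntegral.integral_congr
    intro x hx
    rw [Set.uIcc_of_le htp] at hx
    apply max_eq_right
    have := Real.cos_le_cos_of_nonneg_of_le_pi ht0 hx.2 hx.1
    nlinarith
  have e2 : ∫ x in (-t)..t, max (2 * r * Real.cos x - c) 0 =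
      ∫ x in (-t)..t, (2 * r * Real.cos x - c) := by
    apply intervalIntegral.integral_congr
    intro x hx
    rw [Set.uIcc_of_le (by linarith)] at hx
    apply max_eq_left
    have := Real.cos_le_cos_of_nonneg_of_le_pi (abs_nonneg x) htp (abs_le.2 hx)
    rw [Real.cos_abs] at this
    nlinarith
  rw [e1, e2, e3, int0]
  simp; ring

lemma posint_le (A B r : ℝ) (hr : 0 ≤ r) (hA : 0 ≤ A)
    (h : ∀ t ∈ Set.Icc 0 π, Real.sin t ^ 2 ≤ A * t + B * t ^ 2) :
    ∫ x in (-π)..π, max (2 * r * Real.cos x - (r ^ 2 + B)) 0 ≤ 2 * A := by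
  obtain ⟨t, ht, e⟩ := posint r (r ^ 2 + B) hr
  rw [e]
  rcases ht.1.eq_or_lt with h0 | h0
  · rw [← h0]; simpa using hA
  have h1 := h t ht
  have : t * (2 * r * Real.sin t - (r ^ 2 + B) * t) ≤ t * A := by
    nlinarith [sq_nonneg (r * t - Real.sin t)]
  have := le_of_mul_le_mul_left this h0
  linarith

lemma polar (x y : ℝ) : ∃ r φ : ℝ, 0 ≤ r ∧ x = r * Real.cos φ ∧ y = r * Real.sin φ := by
  refine ⟨‖(⟨x, y⟩ : ℂ)‖, Complex.arg ⟨x, y⟩, norm_nonneg _, ?_, ?_⟩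
  · rw [Complex.norm_mul_cos_arg]
  · rw [Complex.norm_mul_sin_arg]

lemma ga_int (A B : ℝ) (hA : 0 ≤ A)
    (h : ∀ t ∈ Set.Icc 0 π, Real.sin t ^ 2 ≤ A * t + B * t ^ 2) (x y : ℝ) :
    ∫ θ in (0 : ℝ)..(2 * π),
      max (2 * (Real.cos θ * x + Real.sin θ * y) - (x ^ 2 + y ^ 2 + B)) 0 ≤ 2 * A := by
  obtain ⟨r, φ, hr, rfl, rfl⟩ := polar x y
  let F : ℝ → ℝ := fun u => max (2 * r * Real.cos u - (r ^ 2 + B)) 0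
  have hF : Function.Periodic F (2 * π) := fun u => by simp [F]
  have e : ∀ θ, max (2 * (Real.cos θ * (r * Real.cos φ) + Real.sin θ * (r * Real.sin φ)) -
      ((r * Real.cos φ) ^ 2 + (r * Real.sin φ) ^ 2 + B)) 0 = F (θ - φ) := by
    intro θ
    simp only [F, Real.cos_sub]
    congr 1
    linear_combination -r ^ 2 * Real.sin_sq_add_cos_sq φ
  simp only [e]
  rw [intervalIntegral.integral_comp_sub_right (f := F)]
  have e1 := hF.intervalIntegral_add_eq (0 - φ) (-π)
  have e2 : 0 - φ + 2 * π = 2 * π - φ := by ring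
  have e3 : -π + 2 * π = π := by ring
  rw [e2, e3] at e1
  rw [e1]
  exact posint_le A B r hr hA h

lemma lower_s11 (n : ℕ) (hn : 1 ≤ n) (α : Set E2) (hf : α.Finite) (hne : α.Nonempty)
    (hc : α.ncard ≤ n) :
    2 * π - 2 * (n ^ 2 * Real.sin (π / n) ^ 2 / π) ≤ ∫ θ in (0 : ℝ)..(2 * π), mf α (fc θ) := by
  obtain ⟨A, B, hA, h, e⟩ := exists_AB n hn
  have hpi := Real.pi_pos
  let g : E2 → ℝ → ℝ := fun a θ =>
    max (2 * (Real.cos θ * a 0 + Real.sin θ * a 1) - (a 0 ^ 2 + a 1 ^ 2 + B)) 0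
  have hg : ∀ a, Continuous (g a) := fun a => by simp only [g]; fun_prop
  have pw : ∀ θ, 1 - B - ∑ a ∈ hf.toFinset, g a θ ≤ mf α (fc θ) := by
    intro θ
    obtain ⟨a, ha, hae⟩ := (hne.image (fun a => ‖fc θ - a‖ ^ 2)).csInf_mem (hf.image _)
    have h1 : mf α (fc θ) = ‖fc θ - a‖ ^ 2 := hae.symm
    rw [h1, norm_sq_sub]
    have h2 : g a θ ≤ ∑ a ∈ hf.toFinset, g a θ :=
      Finset.single_le_sum (f := fun a => g a θ) (fun i _ => le_max_right _ _) (by simpa using ha)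
    have h3 : 2 * (Real.cos θ * a 0 + Real.sin θ * a 1) - (a 0 ^ 2 + a 1 ^ 2 + B) ≤ g a θ :=
      le_max_left _ _
    linarith
  have hsc : Continuous fun θ => ∑ a ∈ hf.toFinset, g a θ :=
    continuous_finsetSum _ fun a _ => hg a
  have hI : ∫ θ in (0 : ℝ)..(2 * π), (1 - B - ∑ a ∈ hf.toFinset, g a θ) ≤
      ∫ θ in (0 : ℝ)..(2 * π), mf α (fc θ) := by
    apply intervalIntegral.integral_mono (by positivity)
    · exact (continuous_const.sub hsc).intervalIntegrable _ _
    · exact ((mf_cont α hf hne).comp fc_cont).intervalIntegrable _ _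
    · exact pw
  refine le_trans ?_ hI
  rw [intervalIntegral.integral_sub (by simp) (hsc.intervalIntegrable _ _),
    intervalIntegral.integral_finsetSum (fun a _ => (hg a).intervalIntegrable _ _)]
  have hs : ∑ a ∈ hf.toFinset, ∫ θ in (0 : ℝ)..(2 * π), g a θ ≤ n * (2 * A) := by
    calc _ ≤ ∑ a ∈ hf.toFinset, 2 * A := Finset.sum_le_sum fun a _ => ga_int A B hA h (a 0) (a 1)
      _ = (α.ncard : ℝ) * (2 * A) := by
        rw [Finset.sum_const, Set.ncard_eq_toFinset_card α hf]; simp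
      _ ≤ n * (2 * A) := by gcongr
  have : ∫ θ in (0 : ℝ)..(2 * π), (1 - B) = 2 * π * (1 - B) := by simp; ring
  rw [this, ← e]
  linarith

lemma upper_s11 (n : ℕ) (hn : 1 ≤ n) : ∃ α : Set E2, α.Finite ∧ α.Nonempty ∧ α.ncard ≤ n ∧
    ∫ θ in (0 : ℝ)..(2 * π), mf α (fc θ) ≤ 2 * π - 2 * (n ^ 2 * Real.sin (π / n) ^ 2 / π) := by
  have hpi := Real.pi_pos
  have hn0 : (n : ℝ) ≠ 0 := by positivity
  obtain ⟨τ, hτ⟩ : ∃ τ, τ = π / n := ⟨_, rfl⟩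
  have hnτ : n * τ = π := by rw [hτ]; field_simp
  have hτ0 : 0 < τ := by rw [hτ]; positivity
  obtain ⟨R, hR⟩ : ∃ R, R = Real.sin τ / τ := ⟨_, rfl⟩
  have hs : Real.sin τ = R * τ := by rw [hR]; field_simp
  let p : ℕ → E2 := fun k => R • fc (2 * k * τ)
  let s : Finset E2 := (Finset.range n).image p
  have hsf : (s : Set E2).Finite := s.finite_toSet
  have hsn : (s : Set E2).Nonempty := ⟨p 0, by
    simp only [s, Finset.coe_image]; exact ⟨0, by simp; omega, rfl⟩⟩
  refine ⟨s, hsf, hsn, ?_, ?_⟩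
  · rw [Set.ncard_coe_finset]
    exact Finset.card_image_le.trans (by simp)
  have hcont : Continuous fun θ => mf s (fc θ) := (mf_cont s hsf hsn).comp fc_cont
  have hper : Function.Periodic (fun θ => mf s (fc θ)) (2 * π) := fun θ => by
    simp [fc]
  have e1 := hper.intervalIntegral_add_eq 0 (-τ)
  rw [zero_add] at e1
  rw [e1]
  let a : ℕ → ℝ := fun k => (2 * k - 1) * τ
  have e2 := intervalIntegral.sum_integral_adjacent_intervals (μ := volume)
    (f := fun θ => mf s (fc θ)) (a := a) (n := n)
    (fun k _ => hcont.intervalIntegrable _ _)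
  have ea : a 0 = -τ := by simp [a]
  have eb : a n = -τ + 2 * π := by simp only [a]; linear_combination 2 * hnτ
  rw [ea, eb] at e2
  rw [← e2]
  have piece : ∀ k ∈ Finset.range n, ∫ θ in (a k)..(a (k + 1)), mf s (fc θ) ≤
      2 * τ * (1 - R ^ 2) := by
    intro k hk
    have hp : p k ∈ s := Finset.mem_image_of_mem _ hk
    have hle : a k ≤ a (k + 1) := by simp only [a]; push_cast; nlinarith
    calc ∫ θ in (a k)..(a (k + 1)), mf s (fc θ) ≤
        ∫ θ in (a k)..(a (k + 1)), (fun u => 1 + R ^ 2 - 2 * R * Real.cos u) (θ - 2 * k * τ) := by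
          apply intervalIntegral.integral_mono hle (hcont.intervalIntegrable _ _)
          · apply Continuous.intervalIntegrable; fun_prop
          intro θ
          have h1 : mf s (fc θ) ≤ ‖fc θ - p k‖ ^ 2 :=
            csInf_le (hsf.image _).bddBelow ⟨p k, hp, rfl⟩
          refine h1.trans (le_of_eq ?_)
          rw [norm_sq_sub]
          simp only [Real.cos_sub]
          have p0 : p k 0 = R * Real.cos (2 * k * τ) := by simp [p, fc, pt]
          have p1 : p k 1 = R * Real.sin (2 * k * τ) := by simp [p, fc, pt]
          rw [p0, p1]
          linear_combination R ^ 2 * Real.sin_sq_add_cos_sq (2 * k * τ)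
      _ = 2 * τ * (1 - R ^ 2) := by
          rw [intervalIntegral.integral_comp_sub_right
            (f := fun u => 1 + R ^ 2 - 2 * R * Real.cos u)]
          have l1 : a k - 2 * k * τ = -τ := by simp only [a]; ring
          have l2 : a (k + 1) - 2 * k * τ = τ := by simp only [a]; push_cast; ring
          rw [l1, l2, intervalIntegral.integral_sub (by simp)
            (by apply Continuous.intervalIntegrable; fun_prop),
            intervalIntegral.integral_const_mul, integral_cos]
          simp only [intervalIntegral.integral_const, smul_eq_mul, Real.sin_neg]
          rw [hs]; ring
  refine (Finset.sum_le_sum piece).trans (le_of_eq ?_)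
  rw [Finset.sum_const, Finset.card_range, nsmul_eq_mul, ← hτ, hs, ← hnτ]
  field_simp

lemma quant_eq (n : ℕ) (hn : 1 ≤ n) : quantErr (arcP 0 (2 * Real.pi)) n =
    1 - ((n : ℝ) ^ 2 / Real.pi ^ 2) * Real.sin (Real.pi / n) ^ 2 := by
  have hpi := Real.pi_pos
  have ev : (2 * π)⁻¹ * (2 * π - 2 * (n ^ 2 * Real.sin (π / n) ^ 2 / π)) =
      1 - ((n : ℝ) ^ 2 / Real.pi ^ 2) * Real.sin (Real.pi / n) ^ 2 := by
    field_simp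
  have lb : ∀ v ∈ {v : ℝ | ∃ α : Set E2, α.Finite ∧ α.Nonempty ∧ α.ncard ≤ n ∧
      v = ∫ x, sInf ((fun a => ‖x - a‖ ^ 2) '' α) ∂(arcP 0 (2 * Real.pi))},
      1 - ((n : ℝ) ^ 2 / Real.pi ^ 2) * Real.sin (Real.pi / n) ^ 2 ≤ v := by
    rintro v ⟨α, hf, hne, hc, rfl⟩
    rw [integral_arc α hf hne, ← ev]
    exact mul_le_mul_of_nonneg_left (lower_s11 n hn α hf hne hc) (by positivity)
  obtain ⟨α, hf, hne, hc, hu⟩ := upper_s11 n hn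
  unfold quantErr
  apply le_antisymm
  · refine (csInf_le ⟨_, lb⟩ ⟨α, hf, hne, hc, rfl⟩).trans ?_
    rw [integral_arc α hf hne, ← ev]
    exact mul_le_mul_of_nonneg_left hu (by positivity)
  · exact le_csInf ⟨_, α, hf, hne, hc, rfl⟩ lb

lemma lim_sin : Tendsto (fun x : ℝ => (1 - (Real.sin x / x) ^ 2) / x ^ 2) (nhdsWithin 0 (Set.Ioi 0))
    (nhds (1 / 3)) := by
  have h1 : Tendsto (fun x : ℝ => (1 - Real.sin x / x) / x ^ 2) (nhdsWithin 0 (Set.Ioi 0))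
      (nhds (1 / 6)) := by
    rw [tendsto_iff_dist_tendsto_zero]
    have hz : Tendsto (fun x : ℝ => x ^ 2 / 100) (nhdsWithin 0 (Set.Ioi 0)) (nhds 0) := by
      have : Tendsto (fun x : ℝ => x ^ 2 / 100) (nhds 0) (nhds (0 ^ 2 / 100)) :=
        Continuous.tendsto (by fun_prop) 0
      simp at this
      exact this.mono_left nhdsWithin_le_nhds
    refine squeeze_zero' (Eventually.of_forall fun _ => dist_nonneg) ?_ hz
    filter_upwards [Ioo_mem_nhdsGT (show (0 : ℝ) < 1 by norm_num)] with x hx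
    have hx0 : 0 < x := hx.1
    have hb := Real.sin_bound (x := x) (by rw [abs_of_pos hx0]; exact hx.2.le)
    rw [Real.dist_eq]
    have e : (1 - Real.sin x / x) / x ^ 2 - 1 / 6 = -(Real.sin x - (x - x ^ 3 / 6)) / x ^ 3 := by
      field_simp; ring
    rw [e, abs_div, abs_neg, abs_of_pos (pow_pos hx0 3), div_le_iff₀ (by positivity)]
    rw [abs_of_pos hx0] at hb
    refine hb.trans (le_of_eq (by ring))
  have h2 : Tendsto (fun x : ℝ => 1 + Real.sin x / x) (nhdsWithin 0 (Set.Ioi 0)) (nhds 2) := by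
    have hx2 : Tendsto (fun x : ℝ => x ^ 2) (nhdsWithin 0 (Set.Ioi 0)) (nhds 0) := by
      have : Tendsto (fun x : ℝ => x ^ 2) (nhds 0) (nhds (0 ^ 2)) :=
        Continuous.tendsto (by fun_prop) 0
      simp at this
      exact this.mono_left nhdsWithin_le_nhds
    have := (h1.mul hx2).const_sub 2
    simp only [mul_zero, sub_zero] at this
    refine this.congr' ?_
    filter_upwards [self_mem_nhdsWithin] with x hx
    have hx0 : x ≠ 0 := ne_of_gt hx
    field_simp; ring
  have h3 := h1.mul h2
  norm_num at h3
  refine h3.congr fun x => ?_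
  ring

/-- For the uniform distribution on the full unit circle, for every `n ≥ 1` the
`n`th quantization error is `Vₙ = 1 - (n²/π²) sin²(π/n)`, and consequently the
one-dimensional quantization coefficient equals `π²/3`:
`lim_{n→∞} n² Vₙ = π²/3`. -/
theorem stmt_11 :
    (∀ n : ℕ, 1 ≤ n →
      quantErr (arcP 0 (2 * Real.pi)) n =
        1 - ((n : ℝ) ^ 2 / Real.pi ^ 2) * Real.sin (Real.pi / n) ^ 2) ∧
    Tendsto (fun n : ℕ => (n : ℝ) ^ 2 * quantErr (arcP 0 (2 * Real.pi)) n)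
      atTop (nhds (Real.pi ^ 2 / 3)) := by
  refine ⟨quant_eq, ?_⟩
  have hpi := Real.pi_pos
  have hx : Tendsto (fun n : ℕ => Real.pi / (n : ℝ)) atTop (nhdsWithin 0 (Set.Ioi 0)) := by
    rw [tendsto_nhdsWithin_iff]
    refine ⟨tendsto_const_div_atTop_nhds_zero_nat _, ?_⟩
    filter_upwards [eventually_gt_atTop 0] with n hn
    have : (0 : ℝ) < n := by exact_mod_cast hn
    exact Set.mem_Ioi.2 (by positivity)
  have h := (lim_sin.comp hx).const_mul (Real.pi ^ 2)
  have e : Real.pi ^ 2 * (1 / 3) = Real.pi ^ 2 / 3 := by ring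
  rw [e] at h
  refine h.congr' ?_
  filter_upwards [eventually_gt_atTop 0] with n hn
  have : (0 : ℝ) < n := by exact_mod_cast hn
  rw [quant_eq n hn]
  simp only [Function.comp]
  field_simp
end
end

section
/- Let P = ½P₁ + ½P₂ be the mixed probability distribution on the boundary of the upper unit semicircular disc, where P₁ is uniform on the base and P₂ is uniform on the semicircular arc. Then the unique optimal set of one-mean for P is {(0, 1/π)}, and the quantization error for one-mean is V₁(P) = 2/3 − 1/π²; that is, the function (a,b) ↦ ∫ ‖x − (a,b)‖² dP(x) attains its minimum value 2/3 − 1/π² exactly at (a,b) = (0, 1/π). -/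
open MeasureTheory Real Filter
open scoped ENNReal

noncomputable section

/-- The base `L₁ = {(t,0) : -1 ≤ t ≤ 1}` of the upper unit semicircular disc. -/
def baseL : Set E2 := segment ℝ (pt (-1) 0) (pt 1 0)

/-- The semicircular arc `L₂ = {(cos t, sin t) : 0 ≤ t ≤ π}`. -/
def semiArc : Set E2 :=
  {p | ∃ θ : ℝ, 0 ≤ θ ∧ θ ≤ Real.pi ∧ p = pt (Real.cos θ) (Real.sin θ)}

/-- The mixed distribution `P = ½P₁ + ½P₂` on the boundary of the upper unit
semicircular disc, where `P₁` is uniform on the base `L₁` (density `1/2` w.r.t.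
arc length) and `P₂` is uniform on the semicircular arc `L₂` (density `1/π`
w.r.t. arc length). -/
def semiP : Measure E2 :=
  (2 : ℝ≥0∞)⁻¹ • ((2 : ℝ≥0∞)⁻¹ • (μH[1] : Measure E2).restrict baseL) +
  (2 : ℝ≥0∞)⁻¹ • ((ENNReal.ofReal Real.pi)⁻¹ • (μH[1] : Measure E2).restrict semiArc)

lemma aux_dist_sq (x y : E2) : dist x y ^ 2 = (x 0 - y 0) ^ 2 + (x 1 - y 1) ^ 2 := by
  rw [EuclideanSpace.dist_eq, Real.sq_sqrt (by positivity)]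
  simp [Fin.sum_univ_two, Real.dist_eq, sq_abs]

lemma aux_norm_sq (x y : E2) : ‖x - y‖ ^ 2 = (x 0 - y 0) ^ 2 + (x 1 - y 1) ^ 2 := by
  rw [← dist_eq_norm, aux_dist_sq]

@[simp] lemma aux_pt0 (a b : ℝ) : (pt a b) 0 = a := by simp [pt]
@[simp] lemma aux_pt1 (a b : ℝ) : (pt a b) 1 = b := by simp [pt]

lemma aux_ext {x y : E2} (h0 : x 0 = y 0) (h1 : x 1 = y 1) : x = y := by
  ext i; fin_cases i
  · exact h0
  · exact h1

/-- parametrization of the arc -/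
def arcF (t : ℝ) : E2 := pt (Real.cos t) (Real.sin t)
/-- parametrization of the base -/
def baseF (t : ℝ) : E2 := pt t 0

lemma arcF_lip : LipschitzWith 1 arcF := by
  refine LipschitzWith.of_dist_le_mul fun s t => ?_
  simp only [NNReal.coe_one, one_mul]
  refine abs_le_of_sq_le_sq' ?_ dist_nonneg |>.2
  rw [aux_dist_sq, Real.dist_eq, sq_abs]
  simp only [arcF, aux_pt0, aux_pt1]
  have h := Real.one_sub_sq_div_two_le_cos (x := s - t)
  rw [Real.cos_sub] at h
  nlinarith [Real.sin_sq_add_cos_sq s, Real.sin_sq_add_cos_sq t]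

lemma baseF_iso : Isometry baseF := by
  refine Isometry.of_dist_eq fun s t => ?_
  have h : dist (baseF s) (baseF t) ^ 2 = dist s t ^ 2 := by
    rw [aux_dist_sq, Real.dist_eq, sq_abs]; simp [baseF]
  exact (pow_left_inj₀ dist_nonneg dist_nonneg two_ne_zero).1 h

lemma arcF_inj : Set.InjOn arcF (Set.Icc 0 π) := by
  intro s hs t ht h
  have : Real.cos s = Real.cos t := by
    have := congrArg (fun x : E2 => x 0) h
    simpa [arcF] using this
  exact Real.injOn_cos hs ht this

lemma semiArc_eq : semiArc = arcF '' Set.Icc 0 π := by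
  ext p; constructor
  · rintro ⟨t, h0, h1, rfl⟩; exact ⟨t, ⟨h0, h1⟩, rfl⟩
  · rintro ⟨t, ⟨h0, h1⟩, rfl⟩; exact ⟨t, h0, h1, rfl⟩

lemma baseL_eq : baseL = baseF '' Set.Icc (-1) 1 := by
  ext p; constructor
  · rintro ⟨a, b, ha, hb, hab, rfl⟩
    refine ⟨b - a, ⟨by linarith, by linarith⟩, ?_⟩
    apply aux_ext
    · simp [baseF]; ring
    · simp [baseF]
  · rintro ⟨t, ⟨h0, h1⟩, rfl⟩
    refine ⟨(1 - t) / 2, (1 + t) / 2, by linarith, by linarith, by ring, ?_⟩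
    apply aux_ext
    · simp [baseF]; ring
    · simp [baseF]

lemma piece_le (a b : ℝ) (hab : a ≤ b) (hb : b - a ≤ π) :
    ENNReal.ofReal (2 * Real.sin ((b - a) / 2)) ≤ (μH[1] : Measure E2) (arcF '' Set.Ico a b) := by
  set m := (a + b) / 2 with hm
  let p : E2 → ℝ := fun x => x 0 * (- Real.sin m) + x 1 * Real.cos m
  have hp : LipschitzWith 1 p := by
    refine LipschitzWith.of_dist_le_mul fun x y => ?_
    simp only [NNReal.coe_one, one_mul]
    refine abs_le_of_sq_le_sq' ?_ dist_nonneg |>.2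
    rw [aux_dist_sq, Real.dist_eq, sq_abs]
    simp only [p]
    have e := Real.sin_sq_add_cos_sq m
    have key : (x 0 - y 0) ^ 2 + (x 1 - y 1) ^ 2
        = ((x 0 - y 0) ^ 2 + (x 1 - y 1) ^ 2) * (Real.sin m ^ 2 + Real.cos m ^ 2) := by
      rw [e, mul_one]
    rw [key]
    nlinarith [sq_nonneg ((x 0 - y 0) * Real.cos m + (x 1 - y 1) * Real.sin m)]
  have hpf : ∀ t, p (arcF t) = Real.sin (t - m) := by
    intro t; simp only [p, arcF, aux_pt0, aux_pt1, Real.sin_sub]; ring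
  have hsub : Set.Ico (-Real.sin ((b - a) / 2)) (Real.sin ((b - a) / 2)) ⊆
      p '' (arcF '' Set.Ico a b) := by
    rw [Set.image_image]
    simp only [hpf]
    have := intermediate_value_Ico hab (f := fun t => Real.sin (t - m))
      (by fun_prop)
    have e1 : Real.sin (a - m) = -Real.sin ((b - a) / 2) := by
      rw [← Real.sin_neg]; congr 1; rw [hm]; ring
    have e2 : Real.sin (b - m) = Real.sin ((b - a) / 2) := by
      congr 1; rw [hm]; ring
    simpa only [e1, e2] using this
  have h1 := hp.hausdorffMeasure_image_le (d := 1) zero_le_one (arcF '' Set.Ico a b)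
  have h2 := measure_mono (μ := (volume : Measure ℝ)) hsub
  rw [Real.volume_Ico] at h2
  rw [hausdorffMeasure_real] at h1
  simp only [ENNReal.coe_one, ENNReal.one_rpow, one_mul] at h1
  refine le_trans (le_of_eq ?_) (h2.trans h1)
  congr 1; ring

lemma pieces_le (δ : ℝ) (hδ : 0 ≤ δ) (k : ℕ) (hk : k * δ ≤ π) :
    ENNReal.ofReal (k * (2 * Real.sin (δ / 2))) ≤
      (μH[1] : Measure E2) (arcF '' Set.Ico 0 (k * δ)) := by
  induction k with
  | zero => simp
  | succ k ih =>
    push_cast at hk ⊢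
    have hk0 : 0 ≤ k * δ := by positivity
    have hsplit : Set.Ico 0 ((k + 1) * δ) = Set.Ico 0 (k * δ) ∪ Set.Ico (k * δ) ((k + 1) * δ) :=
      (Set.Ico_union_Ico_eq_Ico hk0 (by linarith)).symm
    have s1 : Set.Ico 0 (k * δ) ⊆ Set.Icc 0 π := fun x hx => ⟨hx.1, by linarith [hx.2]⟩
    have s2 : Set.Ico (k * δ) ((k + 1) * δ) ⊆ Set.Icc 0 π :=
      fun x hx => ⟨by linarith [hx.1], by linarith [hx.2]⟩
    have hd : Disjoint (arcF '' Set.Ico 0 (k * δ)) (arcF '' Set.Ico (k * δ) ((k + 1) * δ)) := by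
      refine Set.disjoint_image_image fun x hx y hy h => ?_
      have := arcF_inj (s1 hx) (s2 hy) h
      linarith [hx.2, hy.1]
    have hmeas : MeasurableSet (arcF '' Set.Ico (k * δ) ((k + 1) * δ)) :=
      measurableSet_Ico.image_of_continuousOn_injOn arcF_lip.continuous.continuousOn
        (arcF_inj.mono s2)
    rw [hsplit, Set.image_union, measure_union hd hmeas]
    have hp := piece_le (k * δ) ((k + 1) * δ) (by linarith) (by linarith)
    have e : (k + 1) * δ - k * δ = δ := by ring
    rw [e] at hp
    have hs : 0 ≤ Real.sin (δ / 2) := Real.sin_nonneg_of_nonneg_of_le_pi (by linarith) (by linarith)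
    rw [add_mul, one_mul, ENNReal.ofReal_add (by positivity) (by positivity)]
    exact add_le_add (ih (by linarith)) hp

lemma arc_total_ge : ENNReal.ofReal π ≤ (μH[1] : Measure E2) semiArc := by
  have hn : ∀ n : ℕ, ENNReal.ofReal (π - π ^ 3 / 24 * (1 / ((n : ℝ) + 1)) ^ 2) ≤
      (μH[1] : Measure E2) semiArc := by
    intro n
    have hpos : (0 : ℝ) < n + 1 := by positivity
    have hpi := Real.pi_pos
    have e : ((n + 1 : ℕ) : ℝ) * (π / (n + 1)) = π := by push_cast; field_simp
    have h := pieces_le (π / (n + 1)) (by positivity) (n + 1) e.le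
    rw [e] at h
    refine (ENNReal.ofReal_le_ofReal ?_).trans (h.trans (measure_mono ?_))
    · have hs := (Real.sin_gt_sub_cube (x := π / (n + 1) / 2) (by positivity)).le
      push_cast
      calc π - π ^ 3 / 24 * (1 / ((n : ℝ) + 1)) ^ 2
          = (n + 1) * (2 * (π / (n + 1) / 2 - (π / (n + 1) / 2) ^ 3 / 6)) := by
            field_simp; ring
        _ ≤ _ := by gcongr
    · rw [semiArc_eq]; exact Set.image_mono Set.Ico_subset_Icc_self
  have ht : Tendsto (fun n : ℕ => ENNReal.ofReal (π - π ^ 3 / 24 * (1 / ((n : ℝ) + 1)) ^ 2)) atTop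
      (nhds (ENNReal.ofReal (π - π ^ 3 / 24 * 0 ^ 2))) :=
    ENNReal.tendsto_ofReal
      (((tendsto_one_div_add_atTop_nhds_zero_nat (𝕜 := ℝ)).pow 2).const_mul _ |>.const_sub _)
  have := le_of_tendsto' ht hn
  simpa using this

lemma arc_measure : (μH[1] : Measure E2).restrict semiArc =
    (volume.restrict (Set.Icc 0 π)).map arcF := by
  have hm : Measurable arcF := arcF_lip.continuous.measurable
  have hle : (μH[1] : Measure E2).restrict semiArc ≤ (volume.restrict (Set.Icc 0 π)).map arcF := by
    refine Measure.le_iff.2 fun s hs => ?_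
    rw [Measure.restrict_apply hs, Measure.map_apply hm hs, Measure.restrict_apply (hm hs)]
    have hsub : s ∩ semiArc ⊆ arcF '' (arcF ⁻¹' s ∩ Set.Icc 0 π) := by
      rw [semiArc_eq]
      rintro _ ⟨h1, t, ht, rfl⟩
      exact ⟨t, ⟨h1, ht⟩, rfl⟩
    refine (measure_mono hsub).trans ?_
    have h1 := arcF_lip.hausdorffMeasure_image_le (d := 1) zero_le_one
      (arcF ⁻¹' s ∩ Set.Icc 0 π)
    rw [hausdorffMeasure_real] at h1
    simpa using h1
  have hu : ((volume.restrict (Set.Icc 0 π)).map arcF) Set.univ = ENNReal.ofReal π := by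
    rw [Measure.map_apply hm MeasurableSet.univ]; simp
  have hu' := hle Set.univ
  haveI : IsFiniteMeasure ((μH[1] : Measure E2).restrict semiArc) :=
    ⟨hu'.trans_lt (by rw [hu]; exact ENNReal.ofReal_lt_top)⟩
  refine Measure.eq_of_le_of_measure_univ_eq hle (le_antisymm hu' ?_)
  rw [hu, Measure.restrict_apply_univ]
  exact arc_total_ge

lemma base_measure : (μH[1] : Measure E2).restrict baseL =
    (volume.restrict (Set.Icc (-1) 1)).map baseF := by
  have hm : Measurable baseF := baseF_iso.continuous.measurable
  ext s hs
  rw [Measure.restrict_apply hs, Measure.map_apply hm hs, Measure.restrict_apply (hm hs)]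
  have hsub : s ∩ baseL = baseF '' (baseF ⁻¹' s ∩ Set.Icc (-1) 1) := by
    rw [baseL_eq, Set.inter_comm (baseF ⁻¹' s), Set.image_inter_preimage, Set.inter_comm]
  rw [hsub, baseF_iso.hausdorffMeasure_image (Or.inl zero_le_one), hausdorffMeasure_real]

lemma param_integral (f : ℝ → E2) (hf : Continuous f) (a b : ℝ) (hab : a ≤ b)
    (g : E2 → ℝ) (hg : Continuous g) :
    Integrable g ((volume.restrict (Set.Icc a b)).map f) ∧
    ∫ x, g x ∂((volume.restrict (Set.Icc a b)).map f) = ∫ t in a..b, g (f t) := by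
  constructor
  · rw [integrable_map_measure hg.aestronglyMeasurable hf.aemeasurable]
    exact (hg.comp hf).continuousOn.integrableOn_Icc
  · rw [integral_map hf.aemeasurable hg.aestronglyMeasurable,
      intervalIntegral.integral_of_le hab, integral_Icc_eq_integral_Ioc]

lemma main_integral (p : E2) : ∫ x, ‖x - p‖ ^ 2 ∂semiP =
    2 / 3 - 1 / π ^ 2 + ((p 0) ^ 2 + (p 1 - 1 / π) ^ 2) := by
  have hg : Continuous fun x : E2 => ‖x - p‖ ^ 2 := by fun_prop
  obtain ⟨i1, e1⟩ := param_integral baseF baseF_iso.continuous (-1) 1 (by norm_num) _ hg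
  obtain ⟨i2, e2⟩ := param_integral arcF arcF_lip.continuous 0 π Real.pi_pos.le _ hg
  have hpi := Real.pi_pos
  have hpi' : (ENNReal.ofReal π)⁻¹ ≠ ⊤ := by simp [hpi]
  rw [semiP, arc_measure, base_measure, integral_add_measure
    ((i1.smul_measure (by simp)).smul_measure (by simp))
    ((i2.smul_measure hpi').smul_measure (by simp))]
  simp only [integral_smul_measure, e1, e2]
  simp only [aux_norm_sq, baseF, arcF, aux_pt0, aux_pt1]
  have h1 : ∫ t in (-1 : ℝ)..1, ((t - p 0) ^ 2 + (0 - p 1) ^ 2) =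
      2 / 3 + 2 * (p 0 ^ 2 + p 1 ^ 2) := by
    rw [intervalIntegral.integral_add (Continuous.intervalIntegrable (by fun_prop) _ _)
        (Continuous.intervalIntegrable (by fun_prop) _ _),
      intervalIntegral.integral_comp_sub_right (fun t => t ^ 2)]
    simp; ring
  have h2 : ∫ t in (0 : ℝ)..π, ((Real.cos t - p 0) ^ 2 + (Real.sin t - p 1) ^ 2) =
      π * (1 + p 0 ^ 2 + p 1 ^ 2) - 4 * p 1 := by
    have : ∀ t : ℝ, (Real.cos t - p 0) ^ 2 + (Real.sin t - p 1) ^ 2 =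
        (1 + p 0 ^ 2 + p 1 ^ 2) - (2 * p 0 * Real.cos t + 2 * p 1 * Real.sin t) := by
      intro t; linear_combination Real.sin_sq_add_cos_sq t
    simp only [this]
    rw [intervalIntegral.integral_sub (by simp) (Continuous.intervalIntegrable (by fun_prop) _ _),
      intervalIntegral.integral_const, intervalIntegral.integral_add (Continuous.intervalIntegrable (by fun_prop) _ _)
        (Continuous.intervalIntegrable (by fun_prop) _ _)]
    simp only [intervalIntegral.integral_const_mul, integral_cos, integral_sin]
    norm_num
    try ring
  rw [h1, h2]
  simp only [ENNReal.toReal_inv, ENNReal.toReal_ofReal hpi.le, smul_eq_mul, ENNReal.toReal_ofNat]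
  field_simp
  ring

lemma quant_eq_s13 : quantErr semiP 1 = 2 / 3 - 1 / π ^ 2 := by
  have hset : {v : ℝ | ∃ α : Set E2, α.Finite ∧ α.Nonempty ∧ α.ncard ≤ 1 ∧
      v = ∫ x, sInf ((fun a => ‖x - a‖ ^ 2) '' α) ∂semiP} =
      Set.range fun p : E2 => ∫ x, ‖x - p‖ ^ 2 ∂semiP := by
    ext v; constructor
    · rintro ⟨α, hf, hne, hc, rfl⟩
      have h1 : α.ncard = 1 := le_antisymm hc ((Set.ncard_pos hf).2 hne)
      obtain ⟨p, rfl⟩ := Set.ncard_eq_one.1 h1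
      exact ⟨p, by simp⟩
    · rintro ⟨p, rfl⟩
      exact ⟨{p}, Set.finite_singleton p, Set.singleton_nonempty p, by simp, by simp⟩
  rw [quantErr, hset]
  refine IsLeast.csInf_eq ⟨⟨pt 0 (1 / π), ?_⟩, ?_⟩
  · simp only [main_integral]; simp
  · rintro _ ⟨p, rfl⟩
    simp only [main_integral]
    nlinarith [sq_nonneg (p 0), sq_nonneg (p 1 - 1 / π)]

/-- For the mixed distribution on the boundary of the semicircular disc, the
unique optimal set of one-mean is `{(0, 1/π)}` and `V₁ = 2/3 - 1/π²`: the
function `(a,b) ↦ ∫ ‖x - (a,b)‖² dP` attains its minimum value `2/3 - 1/π²`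
exactly at `(0, 1/π)`. -/
theorem stmt_13 :
    quantErr semiP 1 = 2 / 3 - 1 / Real.pi ^ 2 ∧
    (∫ x, ‖x - pt 0 (1 / Real.pi)‖ ^ 2 ∂semiP) = 2 / 3 - 1 / Real.pi ^ 2 ∧
    (∀ p : E2, p ≠ pt 0 (1 / Real.pi) →
      2 / 3 - 1 / Real.pi ^ 2 < ∫ x, ‖x - p‖ ^ 2 ∂semiP) := by
  refine ⟨quant_eq_s13, ?_, ?_⟩
  · rw [main_integral]; simp
  · intro p hp
    rw [main_integral]
    by_contra hcon
    apply hp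
    have a := sq_nonneg (p 0)
    have b := sq_nonneg (p 1 - 1 / π)
    have h0 : p 0 = 0 := pow_eq_zero_iff two_ne_zero |>.1 (by linarith)
    have h1 : p 1 - 1 / π = 0 := pow_eq_zero_iff two_ne_zero |>.1 (by linarith)
    exact aux_ext (by simpa using h0) (by rw [aux_pt1]; linarith)
end
end
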